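/- arXiv:1801.09540 — 2 statements merged into one kernel-verified Lean document; each statement's English description precedes it below -/
import Mathlib

section
/- (Posterior spread bound.) Let C0 be an injective non-negative compact self-adjoint operator and H a non-negative bounded self-adjoint operator on a separable complex Hilbert space X, let Θ be an index function and 0 < m ≤ 1 ≤ M with m‖Θ(C0)u‖ ≤ ‖H^{1/2}u‖ ≤ M‖Θ(C0)u‖ for all u ∈ X. Let f_0 be an index function with f_0(Θ(t)²)² = t on the relevant interval and f_0² operator concave. Then for every α > 0, every δ > 0 and every Hilbert basis (e_i) of X, writing R := (αI + H)^{-1}, the following inequality of (possibly infinite) sums of non-negative terms holds: δ² · Σ_i ⟨C0 (R^{1/2} e_i), R^{1/2} e_i⟩ ≤ (δ²/m²) · Σ_i ⟨f_0²(H) (R^{1/2} e_i), R^{1/2} e_i⟩. -/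
open scoped InnerProductSpace ENNReal NNReal
noncomputable section

/-- An index function: a continuous function which is non-decreasing and non-negative on
`[0,∞)` and vanishes at `0`. -/
structure IsIndexFun (ψ : ℝ → ℝ) : Prop where
  continuous : Continuous ψ
  monotoneOn : MonotoneOn ψ (Set.Ici 0)
  map_zero : ψ 0 = 0
  nonneg : ∀ t : ℝ, 0 ≤ t → 0 ≤ ψ t

/-- The Loewner-type partial ordering of bounded operators on a complex Hilbert space:
`A ≤ B` iff `⟪A x, x⟫ ≤ ⟪B x, x⟫` for all `x`. -/
def opLE {X : Type*} [NormedAddCommGroup X] [InnerProductSpace ℂ X]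
    (A B : X →L[ℂ] X) : Prop :=
  ∀ x : X, (⟪A x, x⟫_ℂ).re ≤ (⟪B x, x⟫_ℂ).re

/-- Non-negativity of a bounded operator on a complex Hilbert space. -/
def opNonneg {X : Type*} [NormedAddCommGroup X] [InnerProductSpace ℂ X]
    (A : X →L[ℂ] X) : Prop :=
  ∀ x : X, 0 ≤ (⟪A x, x⟫_ℂ).re

/-- `f` is operator concave on `[0, a]`: for all non-negative self-adjoint bounded operators
`G, G'` with spectra contained in `[0, a]` one has `(f(G) + f(G'))/2 ≤ f((G + G')/2)`. -/
def IsOperatorConcaveOn (X : Type*) [NormedAddCommGroup X] [InnerProductSpace ℂ X]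
    [CompleteSpace X] (f : ℝ → ℝ) (a : ℝ) : Prop :=
  ∀ G G' : X →L[ℂ] X, IsSelfAdjoint G → IsSelfAdjoint G' → opNonneg G → opNonneg G' →
    spectrum ℝ G ⊆ Set.Icc 0 a → spectrum ℝ G' ⊆ Set.Icc 0 a →
    opLE ((1/2 : ℂ) • (cfc f G + cfc f G')) (cfc f ((1/2 : ℂ) • (G + G')))

/-- The operator `s_α(H) = α (α I + H)⁻¹`. -/
def sAlpha {X : Type*} [NormedAddCommGroup X] [InnerProductSpace ℂ X] [CompleteSpace X]
    (H : X →L[ℂ] X) (α : ℝ) : X →L[ℂ] X :=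
  (α : ℂ) • Ring.inverse ((α : ℂ) • (1 : X →L[ℂ] X) + H)

universe u


theorem aux_symm {X : Type*} [NormedAddCommGroup X] [InnerProductSpace ℂ X] [CompleteSpace X]
    {T : X →L[ℂ] X} (hT : IsSelfAdjoint T) (x y : X) : ⟪T x, y⟫_ℂ = ⟪x, T y⟫_ℂ := by
  have := ContinuousLinearMap.adjoint_inner_left T y x
  rwa [show ContinuousLinearMap.adjoint T = T from hT] at this

theorem aux_nonneg {X : Type*} [NormedAddCommGroup X] [InnerProductSpace ℂ X] [CompleteSpace X]
    {T : X →L[ℂ] X} (hT : IsSelfAdjoint T) (h : opNonneg T) : 0 ≤ T := by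
  rw [ContinuousLinearMap.nonneg_iff_isPositive, ContinuousLinearMap.isPositive_iff']
  refine ⟨hT, fun x => ?_⟩
  rw [Complex.le_def]
  refine ⟨h x, ?_⟩
  have h1 : (starRingEnd ℂ) ⟪T x, x⟫_ℂ = ⟪T x, x⟫_ℂ := by
    rw [inner_conj_symm, aux_symm hT]
  simpa using (Complex.conj_eq_iff_im.mp h1).symm

theorem aux_re_le {X : Type*} [NormedAddCommGroup X] [InnerProductSpace ℂ X] [CompleteSpace X]
    {S T : X →L[ℂ] X} (h : S ≤ T) (x : X) : (⟪S x, x⟫_ℂ).re ≤ (⟪T x, x⟫_ℂ).re := by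
  have h1 := ((ContinuousLinearMap.isPositive_iff _).1
    ((ContinuousLinearMap.le_def S T).1 h)).2 x
  have h2 := (Complex.le_def.1 h1).1
  simp only [sub_apply, inner_sub_left, Complex.sub_re, Complex.zero_re] at h2
  linarith

theorem aux_sqrt_mul {X : Type*} [NormedAddCommGroup X] [InnerProductSpace ℂ X] [CompleteSpace X]
    {T : X →L[ℂ] X} (hT : 0 ≤ T) : cfc Real.sqrt T * cfc Real.sqrt T = T := by
  have hsa : IsSelfAdjoint T := hT.isSelfAdjoint
  rw [← cfc_mul Real.sqrt Real.sqrt T Real.continuous_sqrt.continuousOn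
    Real.continuous_sqrt.continuousOn]
  conv_rhs => rw [← cfc_id' ℝ T hsa]
  apply cfc_congr
  intro t ht
  exact Real.mul_self_sqrt (spectrum_nonneg_of_nonneg hT ht)

theorem aux_sqrt_norm {X : Type*} [NormedAddCommGroup X] [InnerProductSpace ℂ X] [CompleteSpace X]
    {T : X →L[ℂ] X} (hT : 0 ≤ T) (x : X) :
    (⟪T x, x⟫_ℂ).re = ‖cfc Real.sqrt T x‖ ^ 2 := by
  conv_lhs => rw [← aux_sqrt_mul hT]
  rw [mul_apply_eq_comp, aux_symm (cfc_predicate Real.sqrt T)]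
  exact inner_self_eq_norm_sq (𝕜 := ℂ) _

theorem aux_parseval {X : Type*} [NormedAddCommGroup X] [InnerProductSpace ℂ X]
    {ι : Type*} (e : HilbertBasis ι ℂ X) (x : X) :
    ∑' i, ENNReal.ofReal (‖⟪e i, x⟫_ℂ‖ ^ 2) = ENNReal.ofReal (‖x‖ ^ 2) := by
  have h := e.hasSum_inner_mul_inner x x
  have h2 : HasSum (fun i => ‖⟪e i, x⟫_ℂ‖ ^ 2) (‖x‖ ^ 2) := by
    have h3 := Complex.hasSum_re h
    convert h3 using 1
    · funext i
      rw [← inner_conj_symm x (e i), mul_comm, Complex.mul_conj, Complex.normSq_eq_norm_sq,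
        Complex.ofReal_re]
    · exact (inner_self_eq_norm_sq (𝕜 := ℂ) x).symm
  rw [← h2.tsum_eq, ENNReal.ofReal_tsum_of_nonneg (fun _ => by positivity) h2.summable]

theorem aux_hs {X : Type*} [NormedAddCommGroup X] [InnerProductSpace ℂ X] [CompleteSpace X]
    {ι κ : Type*} (e : HilbertBasis ι ℂ X) (b : HilbertBasis κ ℂ X) (T : X →L[ℂ] X) :
    ∑' i, ENNReal.ofReal (‖T (e i)‖ ^ 2)
      = ∑' j, ENNReal.ofReal (‖ContinuousLinearMap.adjoint T (b j)‖ ^ 2) := by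
  simp_rw [← aux_parseval b (T _), ← aux_parseval e (ContinuousLinearMap.adjoint T _)]
  rw [ENNReal.tsum_comm]
  congr! 6 with j i
  rw [ContinuousLinearMap.adjoint_inner_right, norm_inner_symm]

theorem aux_trace {X : Type*} [NormedAddCommGroup X] [InnerProductSpace ℂ X] [CompleteSpace X]
    {ι κ : Type*} (e : HilbertBasis ι ℂ X) (b : HilbertBasis κ ℂ X) {G : X →L[ℂ] X}
    (hG : 0 ≤ G) (R : X →L[ℂ] X) :
    ∑' i, ENNReal.ofReal ((⟪G (R (e i)), R (e i)⟫_ℂ).re)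
      = ∑' j, ENNReal.ofReal ((⟪G (R (b j)), R (b j)⟫_ℂ).re) := by
  simp_rw [aux_sqrt_norm hG]
  have h1 := aux_hs e b (cfc Real.sqrt G * R)
  have h2 := aux_hs b b (cfc Real.sqrt G * R)
  exact h1.trans h2.symm

theorem aux_eig {X : Type*} [NormedAddCommGroup X] [InnerProductSpace ℂ X] [CompleteSpace X]
    {T : X →L[ℂ] X} (hT : IsSelfAdjoint T) {v : X} (hv : v ≠ 0) {h : ℝ} (hh : T v = (h : ℂ) • v)
    {f : ℝ → ℝ} (hf : Continuous f) : cfc f T v = ((f h : ℝ) : ℂ) • v := by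
  have hmem : h ∈ spectrum ℝ T := by
    rw [spectrum.mem_iff]
    rintro ⟨u, hu⟩
    apply hv
    have h1 : (algebraMap ℝ (X →L[ℂ] X) h - T) v = 0 := by
      simp [hh, Algebra.algebraMap_eq_smul_one]
    rw [← hu] at h1
    have h2 : ((↑u⁻¹ : X →L[ℂ] X) * (u : X →L[ℂ] X)) v = 0 := by
      rw [mul_apply_eq_comp, h1, map_zero]
    simpa using h2
  have key : ∀ g : C(spectrum ℝ T, ℝ), cfcHom hT g v = ((g ⟨h, hmem⟩ : ℝ) : ℂ) • v := by
    intro g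
    induction g using ContinuousMap.induction_on_of_compact with
    | const r =>
      have : cfcHom hT (ContinuousMap.const _ r) = algebraMap ℝ (X →L[ℂ] X) r :=
        AlgHomClass.commutes (cfcHom hT) r
      rw [this]; simp [Algebra.algebraMap_eq_smul_one]
    | id =>
      have : cfcHom hT ((ContinuousMap.id ℝ).restrict (spectrum ℝ T)) = T := cfcHom_id hT
      rw [this, hh]; simp
    | star_id =>
      have : cfcHom hT (star ((ContinuousMap.id ℝ).restrict (spectrum ℝ T))) = T := by
        rw [map_star]
        have := cfcHom_id (R := ℝ) hT
        rw [this, hT.star_eq]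
      rw [this, hh]; simp
    | add f g hf hg => simp [map_add, hf, hg, add_smul]
    | mul f g hf hg =>
      rw [map_mul, mul_apply_eq_comp, hg, map_smul, hf, smul_smul, ContinuousMap.mul_apply]
      rw [Complex.ofReal_mul, mul_comm]
    | frequently f hf =>
      have hcl : IsClosed {g : C(spectrum ℝ T, ℝ) |
          cfcHom hT g v = ((g ⟨h, hmem⟩ : ℝ) : ℂ) • v} := by
        apply isClosed_eq
        · have := cfcHom_continuous (R := ℝ) hT
          fun_prop
        · have : Continuous fun g : C(spectrum ℝ T, ℝ) => g ⟨h, hmem⟩ :=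
            continuous_eval_const _
          fun_prop
      exact hcl.mem_of_frequently_of_tendsto hf Filter.tendsto_id
  rw [cfc_apply f T hT hf.continuousOn, key]
  rfl

theorem aux_cpt_cfc {X : Type*} [NormedAddCommGroup X] [InnerProductSpace ℂ X] [CompleteSpace X]
    {T : X →L[ℂ] X} (hT : IsSelfAdjoint T) (hc : IsCompactOperator T) {f : ℝ → ℝ}
    (hf : Continuous f) (hf0 : f 0 = 0) : IsCompactOperator (cfc f T : X →L[ℂ] X) := by
  rw [← cfcₙ_eq_cfc hf.continuousOn hf0]
  let S : NonUnitalStarSubalgebra ℝ (X →L[ℂ] X) :=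
    { carrier := {A | IsCompactOperator A ∧ IsCompactOperator (star A : X →L[ℂ] X)}
      add_mem' := fun {a b} ha hb => ⟨ha.1.add hb.1, by
        rw [star_add]; exact ha.2.add hb.2⟩
      zero_mem' := ⟨isCompactOperator_zero, by rw [star_zero]; exact isCompactOperator_zero⟩
      mul_mem' := fun {a b} ha hb => ⟨ha.1.comp_clm b, by
        rw [star_mul]; exact hb.2.comp_clm (star a)⟩
      smul_mem' := fun r a ha => ⟨ha.1.smul r, by
        rw [star_smul]; exact ha.2.smul _⟩
      star_mem' := fun {a} ha => ⟨ha.2, by rw [star_star]; exact ha.1⟩ }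
  have hcl : IsClosed (S : Set (X →L[ℂ] X)) := by
    have h1 : IsClosed {A : X →L[ℂ] X | IsCompactOperator A} := isClosed_setOfPred_isCompactOperator
    exact h1.inter (h1.preimage (continuous_star (R := X →L[ℂ] X)))
  have hTS : T ∈ S := ⟨hc, by rw [hT.star_eq]; exact hc⟩
  exact (cfcₙ_mem (𝕜' := ℝ) (hs := hcl) f hTS).1

theorem aux_cpt_dom {X : Type*} [NormedAddCommGroup X] [InnerProductSpace ℂ X] [CompleteSpace X]
    {S K : X →L[ℂ] X} (hK : IsCompactOperator K) {M : ℝ} (hM : 0 < M)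
    (h : ∀ u, ‖S u‖ ≤ M * ‖K u‖) : IsCompactOperator S := by
  refine (isCompactOperator_iff_isCompact_closure_image_ball (S : X →ₗ[ℂ] X) one_pos).2 ?_
  have hK' := hK.isCompact_closure_image_ball (f := (K : X →ₗ[ℂ] X)) 1
  have hKt : TotallyBounded (K '' Metric.ball 0 1) := hK'.totallyBounded.subset subset_closure
  have hSt : TotallyBounded (S '' Metric.ball 0 1) := by
    rw [Metric.totallyBounded_iff]
    intro ε hε
    obtain ⟨t, hts, htf, hcov⟩ := Metric.finite_approx_of_totallyBounded hKt (ε / M) (by positivity)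
    have hts' : ∀ y ∈ t, ∃ u : X, K u = y := fun y hy => by
      obtain ⟨u, -, hu⟩ := hts hy
      exact ⟨u, hu⟩
    choose! w hwt using hts'
    refine ⟨(fun x => S (w x)) '' t, htf.image _, ?_⟩
    rintro _ ⟨u, hu, rfl⟩
    have := hcov ⟨u, hu, rfl⟩
    simp only [Set.mem_iUnion, Metric.mem_ball, exists_prop, Set.mem_image,
      exists_exists_and_eq_and] at this ⊢
    obtain ⟨y, hy, hyd⟩ := this
    refine ⟨y, hy, ?_⟩
    rw [dist_eq_norm, ← map_sub]
    refine (h _).trans_lt ?_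
    rw [map_sub, hwt y hy, ← dist_eq_norm]
    rw [lt_div_iff₀ hM] at hyd
    linarith
  exact hSt.closure.isCompact_of_isClosed isClosed_closure

theorem aux_basis {X : Type u} [NormedAddCommGroup X] [InnerProductSpace ℂ X] [CompleteSpace X]
    {T : X →L[ℂ] X} (hT : IsSelfAdjoint T) (hc : IsCompactOperator T) :
    ∃ (κ : Type u) (b : HilbertBasis κ ℂ X), ∀ j, ∃ h : ℝ, T (b j) = (h : ℂ) • b j := by
  have hsym : (T : X →ₗ[ℂ] X).IsSymmetric := fun x y => aux_symm hT x y
  let E : ℂ → Submodule ℂ X := fun μ => Module.End.eigenspace (T : Module.End ℂ X) μ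
  have hcl : ∀ μ, CompleteSpace (E μ) := by
    intro μ
    have : IsClosed ((E μ : Submodule ℂ X) : Set X) := by
      have h2 : ((E μ : Submodule ℂ X) : Set X) = {x | T x = μ • x} := by
        ext x; simp [E]
      rw [h2]
      exact isClosed_eq T.continuous (continuous_const_smul μ)
    exact this.completeSpace_coe
  choose w c hc' using fun μ => exists_hilbertBasis ℂ (E μ)
  have hon := hsym.orthogonalFamily_eigenspaces.orthonormal_sigma_orthonormal
    (v_family := fun μ => (c μ : w μ → E μ)) (fun μ => (c μ).orthonormal)
  have hbot : (Submodule.span ℂ (Set.range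
      (fun a : Σ μ, w μ => (E a.1).subtypeₗᵢ (c a.1 a.2))))ᗮ = ⊥ := by
    rw [eq_bot_iff, ← ContinuousLinearMap.orthogonalComplement_iSup_eigenspaces_eq_bot hc hsym]
    intro x hx
    rw [Submodule.mem_orthogonal] at hx
    rw [← Submodule.iInf_orthogonal, Submodule.mem_iInf]
    intro μ
    rw [Submodule.mem_orthogonal]
    intro y hy
    have h5 := ((c μ).hasSum_repr ⟨y, hy⟩).mapL (E μ).subtypeL
    have h6 : HasSum (fun i => ⟪x, ((((c μ).repr ⟨y, hy⟩ i) • (c μ i) : E μ) : X)⟫_ℂ) ⟪x, y⟫_ℂ :=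
      h5.mapL (innerSL ℂ x)
    have h7 : ∀ i, ⟪x, ((((c μ).repr ⟨y, hy⟩ i) • (c μ i) : E μ) : X)⟫_ℂ = 0 := by
      intro i
      have h8 := hx _ (Submodule.subset_span ⟨⟨μ, i⟩, rfl⟩)
      have h9 : ⟪x, ((c μ i : E μ) : X)⟫_ℂ = 0 := inner_eq_zero_symm.1 h8
      rw [Submodule.coe_smul, inner_smul_right, h9, mul_zero]
    simp_rw [h7] at h6
    exact inner_eq_zero_symm.1 (h6.unique hasSum_zero)
  refine ⟨Σ μ, w μ, HilbertBasis.mkOfOrthogonalEqBot hon hbot, ?_⟩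
  rintro ⟨μ, j⟩
  rw [HilbertBasis.coe_mkOfOrthogonalEqBot]
  have hmem : T ((c μ j : E μ) : X) = μ • ((c μ j : E μ) : X) :=
    Module.End.mem_eigenspace_iff.1 (c μ j).2
  have hne : ((c μ j : E μ) : X) ≠ 0 := by
    have := (c μ).orthonormal.ne_zero j
    simpa using this
  have hev : Module.End.HasEigenvalue (T : Module.End ℂ X) μ :=
    Module.End.hasEigenvalue_of_hasEigenvector ⟨(c μ j).2, hne⟩
  refine ⟨μ.re, ?_⟩
  have h3 := hsym.conj_eigenvalue_eq_self hev
  have h4 : ((μ.re : ℝ) : ℂ) = μ := Complex.conj_eq_iff_re.1 h3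
  rw [h4]
  exact hmem

theorem aux_mid {φ : ℝ → ℝ} (hφ : Continuous φ) (h0 : 0 ≤ φ 0) (h1 : 0 ≤ φ 1)
    (hm : ∀ s ∈ Set.Icc (0:ℝ) 1, ∀ t ∈ Set.Icc (0:ℝ) 1, (φ s + φ t) / 2 ≤ φ ((s + t) / 2)) :
    ∀ t ∈ Set.Icc (0:ℝ) 1, 0 ≤ φ t := by
  obtain ⟨p₀, hp₀, hmin⟩ := isCompact_Icc.exists_isMinOn (Set.nonempty_Icc.2 zero_le_one)
    (hφ.continuousOn (s := Set.Icc (0:ℝ) 1))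
  have hmin' : ∀ t ∈ Set.Icc (0:ℝ) 1, φ p₀ ≤ φ t := fun t ht => hmin ht
  suffices 0 ≤ φ p₀ from fun t ht => this.trans (hmin' t ht)
  by_contra! hneg
  have hcpt : IsCompact (Set.Icc (0:ℝ) 1 ∩ {t | φ t = φ p₀}) :=
    isCompact_Icc.inter_right (isClosed_eq hφ continuous_const)
  obtain ⟨p, ⟨hpI, hpe⟩, hpl⟩ := hcpt.exists_isLeast ⟨p₀, hp₀, rfl⟩
  simp only [Set.mem_ofPred_eq] at hpe
  have hp0 : 0 < p := by
    rcases hpI.1.lt_or_eq with h | h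
    · exact h
    · rw [← h] at hpe; linarith
  have hp1 : p < 1 := by
    rcases hpI.2.lt_or_eq with h | h
    · exact h
    · rw [h] at hpe; linarith
  obtain ⟨r, hr0, hr1, hr2⟩ : ∃ r, 0 < r ∧ r ≤ p ∧ r ≤ 1 - p :=
    ⟨min p (1 - p), lt_min hp0 (by linarith), min_le_left _ _, min_le_right _ _⟩
  have hA : p - r ∈ Set.Icc (0:ℝ) 1 := ⟨by linarith, by linarith⟩
  have hB : p + r ∈ Set.Icc (0:ℝ) 1 := ⟨by linarith, by linarith⟩
  have h2 := hm _ hA _ hB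
  rw [show (p - r + (p + r)) / 2 = p by ring] at h2
  have h3 := hmin' _ hA
  have h4 := hmin' _ hB
  have h5 := hpl ⟨hA, show φ (p - r) = φ p₀ by linarith⟩
  linarith

theorem aux_concave {g : ℝ → ℝ} (hg : Continuous g) {c : ℝ}
    (hm : ∀ s ∈ Set.Icc (0:ℝ) c, ∀ t ∈ Set.Icc (0:ℝ) c, (g s + g t) / 2 ≤ g ((s + t) / 2)) :
    ConcaveOn ℝ (Set.Icc 0 c) g := by
  refine ⟨convex_Icc _ _, ?_⟩
  intro x hx y hy a b ha hb hab
  have hmem : ∀ t ∈ Set.Icc (0:ℝ) 1, x + t * (y - x) ∈ Set.Icc 0 c := by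
    intro t ht
    have := convex_Icc 0 c hx hy (show 0 ≤ 1 - t by linarith [ht.2]) ht.1 (by ring)
    convert this using 1
    simp only [smul_eq_mul]; ring
  have := aux_mid (φ := fun t => g (x + t * (y - x)) - (g x + t * (g y - g x))) (by fun_prop)
    (by simp) (by simp) (by
      intro s hs t ht
      have := hm _ (hmem s hs) _ (hmem t ht)
      rw [show (x + s * (y - x) + (x + t * (y - x))) / 2 = x + (s + t) / 2 * (y - x) by ring] at this
      linarith) b ⟨hb, by linarith⟩
  simp only [smul_eq_mul]
  obtain rfl : a = 1 - b := by linarith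
  rw [show (1 - b) * x + b * y = x + b * (y - x) by ring]
  linarith

theorem aux_support {g : ℝ → ℝ} (hg : Continuous g) {c : ℝ} (hmono : MonotoneOn g (Set.Ici 0))
    (hc : ConcaveOn ℝ (Set.Icc 0 c) g) {s : ℝ} (hs : s ∈ Set.Icc 0 c) {ε : ℝ} (hε : 0 < ε) :
    ∃ k, 0 ≤ k ∧ ∀ y ∈ Set.Icc 0 c, g y ≤ g s + ε + k * (y - s) := by
  obtain ⟨k, d, h1, h2⟩ := hc.neg.exists_affine_le_of_lt_real (a := - g s - ε) hs
    (by simp [hε]) isClosed_Icc hg.neg.continuousOn.lowerSemicontinuousOn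
  simp only [Pi.neg_apply] at h1
  by_cases hk : k ≤ 0
  · refine ⟨-k, by linarith, fun y hy => ?_⟩
    have := h1 y hy
    nlinarith
  · push Not at hk
    refine ⟨0, le_rfl, fun y hy => ?_⟩
    rcases le_total y s with h | h
    · have := hmono hy.1 hs.1 h
      linarith
    · have := h1 y hy
      nlinarith

theorem aux_opconc {X : Type*} [NormedAddCommGroup X] [InnerProductSpace ℂ X] [CompleteSpace X]
    {v : X} (hv : ‖v‖ = 1) {g : ℝ → ℝ} {c : ℝ} (h : IsOperatorConcaveOn X g c) :
    ∀ s ∈ Set.Icc (0:ℝ) c, ∀ t ∈ Set.Icc (0:ℝ) c, (g s + g t) / 2 ≤ g ((s + t) / 2) := by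
  intro s hs t ht
  have hnt : Nontrivial X := ⟨v, 0, by rintro rfl; simp at hv⟩
  have hin : ∀ r : ℝ, ∀ x : X, (⟪algebraMap ℝ (X →L[ℂ] X) r x, x⟫_ℂ).re = r * ‖x‖ ^ 2 := by
    intro r x
    have h1 : algebraMap ℝ (X →L[ℂ] X) r x = (r : ℂ) • x := by
      simp [Algebra.algebraMap_eq_smul_one]
    rw [h1, inner_smul_left, inner_self_eq_norm_sq_to_K]
    simp [← Complex.ofReal_pow]
  have hsa : ∀ r : ℝ, IsSelfAdjoint (algebraMap ℝ (X →L[ℂ] X) r) := fun r =>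
    IsSelfAdjoint.algebraMap _ (IsSelfAdjoint.all r)
  have hnn : ∀ r : ℝ, 0 ≤ r → opNonneg (algebraMap ℝ (X →L[ℂ] X) r) := by
    intro r hr x
    rw [hin]; positivity
  have hsp : ∀ r ∈ Set.Icc 0 c, spectrum ℝ (algebraMap ℝ (X →L[ℂ] X) r) ⊆ Set.Icc 0 c := by
    intro r hr
    rw [spectrum.scalar_eq]
    simpa using hr
  have key := h _ _ (hsa s) (hsa t) (hnn s hs.1) (hnn t ht.1) (hsp s hs) (hsp t ht) v
  have e1 : (1/2 : ℂ) • (algebraMap ℝ (X →L[ℂ] X) s + algebraMap ℝ (X →L[ℂ] X) t)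
      = algebraMap ℝ (X →L[ℂ] X) ((s + t) / 2) := by
    ext x
    simp [Algebra.algebraMap_eq_smul_one, ← add_smul]
    simp only [← Complex.coe_smul, smul_smul]
    congr 1; push_cast; ring
  have e2 : (1/2 : ℂ) • (algebraMap ℝ (X →L[ℂ] X) (g s) + algebraMap ℝ (X →L[ℂ] X) (g t))
      = algebraMap ℝ (X →L[ℂ] X) ((g s + g t) / 2) := by
    ext x
    simp [Algebra.algebraMap_eq_smul_one, ← add_smul]
    simp only [← Complex.coe_smul, smul_smul]
    congr 1; push_cast; ring
  rw [cfc_algebraMap, cfc_algebraMap, e1, e2, cfc_algebraMap, hin, hin, hv] at key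
  simpa using key


theorem aux_main {X : Type*} [NormedAddCommGroup X] [InnerProductSpace ℂ X] [CompleteSpace X]
    {C0 H : X →L[ℂ] X} (hC0 : 0 ≤ C0) (hH : 0 ≤ H)
    {Θ : ℝ → ℝ} (hΘ : IsIndexFun Θ)
    {m : ℝ} (hm : 0 < m) (hm1 : m ≤ 1)
    (hlink : ∀ u : X, m * ‖cfc Θ C0 u‖ ≤ ‖cfc Real.sqrt H u‖)
    {f0 : ℝ → ℝ} (hf0 : IsIndexFun f0)
    (hf0Θ : ∀ t ∈ Set.Icc (0:ℝ) ‖C0‖, (f0 ((Θ t)^2))^2 = t)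
    {c : ℝ} (hc : ‖H‖ / m^2 ≤ c)
    (hconcf0 : IsOperatorConcaveOn X (fun t => (f0 t)^2) c)
    {v : X} (hv : ‖v‖ = 1) {h : ℝ} (hh : H v = (h : ℂ) • v) :
    (⟪C0 v, v⟫_ℂ).re ≤ f0 h ^ 2 / m ^ 2 := by
  have hC0sa : IsSelfAdjoint C0 := hC0.isSelfAdjoint
  have hnt : Nontrivial X := ⟨v, 0, by rintro rfl; simp at hv⟩
  have hgc : Continuous (fun t => (f0 t)^2) := hf0.continuous.pow 2
  have hconc := aux_concave hgc (aux_opconc hv hconcf0)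
  have hmono : MonotoneOn (fun t => (f0 t)^2) (Set.Ici 0) := by
    intro a ha b hb hab
    exact pow_le_pow_left₀ (hf0.nonneg a ha) (hf0.monotoneOn ha hb hab) 2
  have hvh : (⟪H v, v⟫_ℂ).re = h := by
    rw [hh, inner_smul_left, inner_self_eq_norm_sq_to_K, hv]
    simp
  have hsq : ∀ u : X, ‖cfc Real.sqrt H u‖ ^ 2 ≤ ‖H‖ * ‖u‖ ^ 2 := by
    intro u
    rw [← aux_sqrt_norm hH]
    calc (⟪H u, u⟫_ℂ).re ≤ ‖⟪H u, u⟫_ℂ‖ := Complex.re_le_norm _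
      _ ≤ ‖H u‖ * ‖u‖ := norm_inner_le_norm _ _
      _ ≤ ‖H‖ * ‖u‖ * ‖u‖ := by gcongr; exact H.le_opNorm u
      _ = _ := by ring
  have hvs : ‖cfc Real.sqrt H v‖ ^ 2 = h := by rw [← aux_sqrt_norm hH, hvh]
  have h0 : 0 ≤ h := by rw [← hvs]; positivity
  have hhH : h ≤ ‖H‖ := by rw [← hvs]; simpa [hv] using hsq v
  have hm2 : 0 < m ^ 2 := by positivity
  have hs : h / m ^ 2 ∈ Set.Icc 0 c :=
    ⟨by positivity, le_trans (by gcongr) hc⟩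
  have hΘsq : ∀ u : X, ‖cfc Θ C0 u‖ ^ 2 ≤ ‖cfc Real.sqrt H u‖ ^ 2 / m ^ 2 := by
    intro u
    rw [le_div_iff₀ hm2, mul_comm, ← mul_pow]
    exact pow_le_pow_left₀ (by positivity) (hlink u) 2
  have hspec : ∀ t ∈ spectrum ℝ C0, (Θ t) ^ 2 ∈ Set.Icc 0 c := by
    intro t ht
    refine ⟨by positivity, le_trans ?_ hc⟩
    have h1 : ‖Θ t‖ ≤ ‖cfc Θ C0‖ := norm_apply_le_norm_cfc Θ C0 ht hΘ.continuous.continuousOn hC0sa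
    have h2 : ‖cfc Θ C0‖ ≤ Real.sqrt (‖H‖ / m ^ 2) := by
      refine ContinuousLinearMap.opNorm_le_bound _ (Real.sqrt_nonneg _) fun u => ?_
      refine abs_le_of_sq_le_sq' ?_ (by positivity) |>.2
      rw [mul_pow, Real.sq_sqrt (by positivity)]
      refine (hΘsq u).trans ?_
      rw [div_mul_eq_mul_div]
      gcongr
      exact hsq u
    have h3 := pow_le_pow_left₀ (norm_nonneg _) (h1.trans h2) 2
    rw [Real.sq_sqrt (by positivity), Real.norm_eq_abs, sq_abs] at h3
    exact h3
  have hscale : f0 (h / m ^ 2) ^ 2 ≤ f0 h ^ 2 / m ^ 2 := by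
    have h1 := hconc.2 hs (show (0:ℝ) ∈ Set.Icc 0 c from ⟨le_rfl, hs.1.trans hs.2⟩)
      hm2.le (show 0 ≤ 1 - m ^ 2 by nlinarith) (by ring)
    simp only [smul_eq_mul, hf0.map_zero, mul_zero, add_zero] at h1
    rw [mul_div_cancel₀ _ hm2.ne'] at h1
    rw [le_div_iff₀ hm2]
    simp only [ne_eq, OfNat.ofNat_ne_zero, not_false_eq_true, zero_pow, mul_zero, add_zero] at h1
    linarith
  refine le_trans ?_ hscale
  refine le_of_forall_pos_le_add fun ε hε => ?_
  obtain ⟨k, hk, hsup⟩ := aux_support hgc hmono hconc hs hε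
  have hop : C0 ≤ cfc (fun t => (f0 (h / m ^ 2) ^ 2 + ε - k * (h / m ^ 2)) + k * (Θ t * Θ t)) C0 := by
    have hΘc := hΘ.continuous
    conv_lhs => rw [← cfc_id' ℝ C0 hC0sa]
    apply cfc_mono
    · intro t ht
      have h1 := hsup _ (hspec t ht)
      have h2 := hf0Θ t ⟨spectrum_nonneg_of_nonneg hC0 ht,
        (le_abs_self t).trans (spectrum.norm_le_norm_of_mem ht)⟩
      rw [h2] at h1
      nlinarith
    · exact continuous_id.continuousOn
    · exact Continuous.continuousOn (by fun_prop)
  have hΘc := hΘ.continuous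
  rw [cfc_const_add _ (fun t => k * (Θ t * Θ t)) C0 (by fun_prop) hC0sa,
    cfc_const_mul k (fun t => Θ t * Θ t) C0 (by fun_prop),
    cfc_mul Θ Θ C0 (by fun_prop) (by fun_prop)] at hop
  have h1 := aux_re_le hop v
  have h2 : (⟪(cfc Θ C0 * cfc Θ C0) v, v⟫_ℂ).re = ‖cfc Θ C0 v‖ ^ 2 := by
    rw [mul_apply_eq_comp, aux_symm (cfc_predicate Θ C0)]
    exact inner_self_eq_norm_sq (𝕜 := ℂ) _
  have h3 : ∀ r : ℝ, ∀ x : X, (⟪r • x, v⟫_ℂ).re = r * (⟪x, v⟫_ℂ).re := by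
    intro r x
    rw [← Complex.coe_smul, inner_smul_left]
    simp
  have h4 : (⟪v, v⟫_ℂ).re = 1 := by
    rw [inner_self_eq_norm_sq_to_K, hv]; simp
  rw [add_apply, inner_add_left, Complex.add_re, Algebra.algebraMap_eq_smul_one,
    smul_apply, smul_apply, h3, h3, h2,
    one_apply_eq_self, h4] at h1
  have h5 := hΘsq v
  rw [hvs] at h5
  have h6 := mul_le_mul_of_nonneg_left h5 hk
  linarith

/-- Proposition: posterior spread bound:
`δ² tr[(αI + H)⁻¹ C0] ≤ (δ²/m²) tr[(αI + H)⁻¹ f₀²(H)]`, stated via the traces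
`Σ_i ⟪G (R^{1/2} e_i), R^{1/2} e_i⟫` over an arbitrary Hilbert basis `(e_i)`. -/
theorem statement10
    {X : Type*} [NormedAddCommGroup X] [InnerProductSpace ℂ X] [CompleteSpace X]
    [TopologicalSpace.SeparableSpace X]
    (C0 H : X →L[ℂ] X)
    (hC0sa : IsSelfAdjoint C0) (hC0nn : opNonneg C0)
    (hC0cpt : IsCompactOperator (⇑C0)) (hC0inj : Function.Injective (⇑C0))
    (hHsa : IsSelfAdjoint H) (hHnn : opNonneg H)
    (Θ : ℝ → ℝ) (hΘ : IsIndexFun Θ)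
    (m M : ℝ) (hm : 0 < m) (hm1 : m ≤ 1) (hM : 1 ≤ M)
    (hlink : ∀ u : X, m * ‖cfc Θ C0 u‖ ≤ ‖cfc Real.sqrt H u‖ ∧
      ‖cfc Real.sqrt H u‖ ≤ M * ‖cfc Θ C0 u‖)
    (f0 : ℝ → ℝ) (hf0 : IsIndexFun f0)
    (hf0Θ : ∀ t ∈ Set.Icc (0:ℝ) ‖C0‖, (f0 ((Θ t)^2))^2 = t)
    (c : ℝ) (hc : ‖H‖ / m^2 ≤ c)
    (hconcf0 : IsOperatorConcaveOn X (fun t => (f0 t)^2) c)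
    (α δ : ℝ) (hα : 0 < α) (hδ : 0 < δ)
    {ι : Type*} (e : HilbertBasis ι ℂ X)
    (Rh : X →L[ℂ] X)
    (hRh : Rh = cfc Real.sqrt (Ring.inverse ((α : ℂ) • (1 : X →L[ℂ] X) + H))) :
    ENNReal.ofReal (δ^2) *
        ∑' i : ι, ENNReal.ofReal ((⟪C0 (Rh (e i)), Rh (e i)⟫_ℂ).re)
      ≤ ENNReal.ofReal (δ^2 / m^2) *
        ∑' i : ι, ENNReal.ofReal
          ((⟪cfc (fun t => (f0 t)^2) H (Rh (e i)), Rh (e i)⟫_ℂ).re) := by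
  have hC0 : 0 ≤ C0 := aux_nonneg hC0sa hC0nn
  have hH : 0 ≤ H := aux_nonneg hHsa hHnn
  have hScpt : IsCompactOperator (cfc Real.sqrt H : X →L[ℂ] X) :=
    aux_cpt_dom (aux_cpt_cfc hC0sa hC0cpt hΘ.continuous hΘ.map_zero)
      (zero_lt_one.trans_le hM) (fun u => (hlink u).2)
  have hHcpt : IsCompactOperator H := by
    rw [← aux_sqrt_mul hH]
    exact hScpt.comp_clm (cfc Real.sqrt H)
  obtain ⟨κ, b, hb⟩ := aux_basis hHsa hHcpt
  have hgH : 0 ≤ cfc (fun t => (f0 t)^2) H := cfc_nonneg fun t _ => by positivity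
  rw [aux_trace e b hC0 Rh, aux_trace e b hgH Rh, ← ENNReal.tsum_mul_left,
    ← ENNReal.tsum_mul_left]
  refine ENNReal.tsum_le_tsum fun j => ?_
  rw [← ENNReal.ofReal_mul (by positivity), ← ENNReal.ofReal_mul (by positivity)]
  apply ENNReal.ofReal_le_ofReal
  obtain ⟨h, hh⟩ := hb j
  have hv : ‖b j‖ = 1 := b.orthonormal.1 j
  have hne : b j ≠ 0 := b.orthonormal.ne_zero j
  have hkey := aux_main hC0 hH hΘ hm hm1 (fun u => (hlink u).1) hf0 hf0Θ hc hconcf0 hv hh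
  have h0 : 0 ≤ h := by
    have := hHnn (b j)
    rw [hh, inner_smul_left, inner_self_eq_norm_sq_to_K, hv] at this
    simpa using this
  obtain ⟨ρ, hρ⟩ : ∃ ρ : ℝ, Rh (b j) = (ρ : ℂ) • b j := by
    set A : X →L[ℂ] X := (α : ℂ) • (1 : X →L[ℂ] X) + H with hA
    have hAsa : IsSelfAdjoint A := by
      refine IsSelfAdjoint.add ?_ hHsa
      rw [isSelfAdjoint_iff, star_smul, star_one]
      simp
    have hAu : IsUnit A := by
      have h1 : IsUnit (algebraMap ℝ (X →L[ℂ] X) (-α) - H) := by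
        by_contra hcon
        have := spectrum_nonneg_of_nonneg hH (spectrum.mem_iff.2 hcon)
        linarith
      have h2 : A = -(algebraMap ℝ (X →L[ℂ] X) (-α) - H) := by
        ext x
        simp [hA, Algebra.algebraMap_eq_smul_one, add_comm]
      rw [h2]
      exact h1.neg
    have hAb : A (b j) = ((α + h : ℝ) : ℂ) • b j := by
      simp [hA, hh, add_smul]
    have hIb : Ring.inverse A (b j) = (((α + h)⁻¹ : ℝ) : ℂ) • b j := by
      have h1 : (Ring.inverse A * A) (b j) = b j := by
        rw [Ring.inverse_mul_cancel _ hAu]; simp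
      rw [mul_apply_eq_comp, hAb, map_smul] at h1
      conv_rhs => rw [← h1]
      rw [smul_smul, ← Complex.ofReal_mul, inv_mul_cancel₀ (by positivity)]
      simp
    have hIsa : IsSelfAdjoint (Ring.inverse A) := by
      rw [isSelfAdjoint_iff, ← Ring.inverse_star, hAsa.star_eq]
    exact ⟨_, by rw [hRh]; exact aux_eig hIsa hne hIb Real.continuous_sqrt⟩
  have hgb := aux_eig hHsa hne hh (hf0.continuous.pow 2)
  have hR : ∀ G : X →L[ℂ] X, (⟪G (Rh (b j)), Rh (b j)⟫_ℂ).re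
      = ρ ^ 2 * (⟪G (b j), b j⟫_ℂ).re := by
    intro G
    rw [hρ, map_smul, inner_smul_left, inner_smul_right, ← mul_assoc, Complex.conj_ofReal,
      ← Complex.ofReal_mul, Complex.re_ofReal_mul]
    ring
  have hg2 : (⟪cfc (fun t => (f0 t)^2) H (b j), b j⟫_ℂ).re = f0 h ^ 2 := by
    have hgb' : cfc (fun t => (f0 t)^2) H (b j) = ((f0 h ^ 2 : ℝ) : ℂ) • b j := hgb
    rw [hgb', inner_smul_left, inner_self_eq_norm_sq_to_K, hv, Complex.conj_ofReal,
      Complex.re_ofReal_mul]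
    simp
  rw [hR, hR, hg2]
  calc δ ^ 2 * (ρ ^ 2 * (⟪C0 (b j), b j⟫_ℂ).re)
      ≤ δ ^ 2 * (ρ ^ 2 * (f0 h ^ 2 / m ^ 2)) := by gcongr
    _ = δ ^ 2 / m ^ 2 * (ρ ^ 2 * f0 h ^ 2) := by ring
end
end

section
/- (Bound for the squared posterior contraction, regular case.) Let C0 be an injective non-negative compact self-adjoint operator and H a non-negative bounded self-adjoint operator on a separable complex Hilbert space X, let Θ be an index function and 0 < m ≤ 1 ≤ M with m‖Θ(C0)u‖ ≤ ‖H^{1/2}u‖ ≤ M‖Θ(C0)u‖ for all u ∈ X. Let f_0 be an index function with f_0(Θ(t)²)² = t on the relevant interval and f_0² operator concave. Let φ be an index function such that t ↦ φ(t)/√t and t ↦ Θ(t)/φ(t) are index functions, such that the function g², where g(t) := φ(f_0²(t))/√(f_0²(t)) for t > 0 and g(0) = 0, is operator concave on the relevant interval, and such that t ↦ φ(f_0²(t))/t is non-increasing on (0,∞). Then for every α > 0, δ > 0, every v ∈ X with ‖v‖ ≤ 1, and every Hilbert basis (e_i) of X, writing R := (αI + H)^{-1}: ‖C0^{1/2}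 · αR · (φ/φ_0)(C0) v‖² + 2δ² Σ_i ⟨C0 (R^{1/2} e_i), R^{1/2} e_i⟩ ≤ (M²/m²) · [ φ(f_0²(α))² + 2δ² Σ_i ⟨f_0²(H) (R^{1/2} e_i), R^{1/2} e_i⟩ ], where (φ/φ_0)(t) = φ(t)/√t and the sums take values in [0,∞]. -/
open scoped InnerProductSpace ENNReal NNReal
noncomputable section

lemma aux_midconc (F : ℝ → ℝ) (hF : ContinuousOn F (Set.Icc 0 1))
    (hm : ∀ a ∈ Set.Icc (0:ℝ) 1, ∀ b ∈ Set.Icc (0:ℝ) 1, (F a + F b) / 2 ≤ F ((a + b) / 2)) :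
    ∀ s ∈ Set.Icc (0:ℝ) 1, s * F 1 + (1 - s) * F 0 ≤ F s := by
  have hc : ContinuousOn (fun s => F s - (s * F 1 + (1 - s) * F 0)) (Set.Icc 0 1) := by
    apply hF.sub; fun_prop
  obtain ⟨s0, hs0, hmin⟩ := isCompact_Icc.exists_isMinOn (Set.nonempty_Icc.2 zero_le_one) hc
  have key : 0 ≤ F s0 - (s0 * F 1 + (1 - s0) * F 0) := by
    obtain ⟨h0, h1⟩ := hs0
    rcases le_total s0 (1/2) with h | h
    · have h2 : 2 * s0 ∈ Set.Icc (0:ℝ) 1 := ⟨by linarith, by linarith⟩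
      have := hmin h2
      have h3 := hm 0 (by simp) _ h2
      rw [show (0 + 2 * s0) / 2 = s0 by ring] at h3
      change F s0 - (s0 * F 1 + (1 - s0) * F 0) ≤ F (2*s0) - (2*s0 * F 1 + (1 - 2*s0) * F 0) at this
      linarith
    · have h2 : 2 * s0 - 1 ∈ Set.Icc (0:ℝ) 1 := ⟨by linarith, by linarith⟩
      have := hmin h2
      have h3 := hm 1 (by simp) _ h2
      rw [show (1 + (2 * s0 - 1)) / 2 = s0 by ring] at h3
      change F s0 - (s0 * F 1 + (1 - s0) * F 0) ≤
        F (2*s0-1) - ((2*s0-1) * F 1 + (1 - (2*s0-1)) * F 0) at this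
      linarith
  intro s hs
  have := hmin hs
  change F s0 - (s0 * F 1 + (1 - s0) * F 0) ≤ F s - (s * F 1 + (1 - s) * F 0) at this
  linarith

section aux
variable {X : Type*} [NormedAddCommGroup X] [InnerProductSpace ℂ X] [CompleteSpace X]

lemma aux_le_iff (A B : X →L[ℂ] X) (hA : IsSelfAdjoint A) (hB : IsSelfAdjoint B) :
    A ≤ B ↔ opLE A B := by
  rw [ContinuousLinearMap.le_def, ContinuousLinearMap.isPositive_def']
  constructor
  · rintro ⟨-, h⟩ x
    have := h x
    simp [ContinuousLinearMap.reApplyInnerSelf, inner_sub_left] at this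
    exact this
  · intro h
    refine ⟨hB.sub hA, fun x => ?_⟩
    have := h x
    simp [ContinuousLinearMap.reApplyInnerSelf, inner_sub_left]
    exact this

lemma aux_nonneg_s12 (A : X →L[ℂ] X) (hA : IsSelfAdjoint A) (h : opNonneg A) : 0 ≤ A := by
  rw [aux_le_iff 0 A (IsSelfAdjoint.zero _) hA]
  intro x; simpa using h x

lemma aux_re_smul (r : ℝ) (A : X →L[ℂ] X) (x : X) :
    (⟪(r • A) x, x⟫_ℂ).re = r * (⟪A x, x⟫_ℂ).re := by
  rw [smul_apply, ← Complex.coe_smul, inner_smul_left]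
  simp

lemma aux_spec (A : X →L[ℂ] X) (hA : IsSelfAdjoint A) (h : opNonneg A) (c : ℝ)
    (hc : ∀ x, (⟪A x, x⟫_ℂ).re ≤ c * ‖x‖^2) : spectrum ℝ A ⊆ Set.Icc 0 c := by
  intro t ht
  refine ⟨spectrum_nonneg_of_nonneg (aux_nonneg_s12 A hA h) ht, ?_⟩
  have h1 : A ≤ algebraMap ℝ (X →L[ℂ] X) c := by
    rw [aux_le_iff _ _ hA (IsSelfAdjoint.algebraMap _ (IsSelfAdjoint.all c))]
    intro x
    rw [Algebra.algebraMap_eq_smul_one, aux_re_smul]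
    refine (hc x).trans (le_of_eq ?_)
    simp [inner_self_eq_norm_sq_to_K, ← Complex.ofReal_pow]
  exact (le_algebraMap_iff_spectrum_le hA).1 h1 t ht

lemma aux_conc (f : ℝ → ℝ) (hf : Continuous f) (c : ℝ) (hconc : IsOperatorConcaveOn X f c)
    (G G' : X →L[ℂ] X) (hG : IsSelfAdjoint G) (hG' : IsSelfAdjoint G')
    (hn : opNonneg G) (hn' : opNonneg G')
    (hb : ∀ x, (⟪G x, x⟫_ℂ).re ≤ c * ‖x‖^2) (hb' : ∀ x, (⟪G' x, x⟫_ℂ).re ≤ c * ‖x‖^2)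
    (x : X) (s : ℝ) (hs : s ∈ Set.Icc (0:ℝ) 1) :
    s * (⟪cfc f G x, x⟫_ℂ).re + (1 - s) * (⟪cfc f G' x, x⟫_ℂ).re ≤
      (⟪cfc f (s • G + (1 - s) • G') x, x⟫_ℂ).re := by
  set a : ℝ → (X →L[ℂ] X) := fun s => s • G + (1 - s) • G' with ha
  have hsa : ∀ s, IsSelfAdjoint (a s) := fun s =>
    ((IsSelfAdjoint.all s).smul hG).add ((IsSelfAdjoint.all (1-s)).smul hG')
  have hq : ∀ s x, (⟪a s x, x⟫_ℂ).re = s * (⟪G x, x⟫_ℂ).re + (1 - s) * (⟪G' x, x⟫_ℂ).re := by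
    intro s x
    simp only [ha]
    rw [add_apply, inner_add_left, Complex.add_re, aux_re_smul, aux_re_smul]
  have hnn : ∀ s ∈ Set.Icc (0:ℝ) 1, opNonneg (a s) := by
    intro s hs x
    rw [hq]
    have := hn x; have := hn' x; have := hs.1; have : 0 ≤ 1 - s := by linarith [hs.2]
    positivity
  have hsp : ∀ s ∈ Set.Icc (0:ℝ) 1, spectrum ℝ (a s) ⊆ Set.Icc 0 c := by
    intro s hs
    refine aux_spec _ (hsa s) (hnn s hs) c fun x => ?_
    rw [hq]
    have h1 := mul_le_mul_of_nonneg_left (hb x) hs.1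
    have h2 := mul_le_mul_of_nonneg_left (hb' x) (show 0 ≤ 1 - s by linarith [hs.2])
    linarith
  have hcont : ContinuousOn (fun s => cfc f (a s)) (Set.Icc 0 1) := by
    refine ContinuousOn.cfc' (isCompact_Icc (a := (0:ℝ)) (b := c)) f ?_ hsp (fun s _ => hsa s)
      hf.continuousOn
    apply Continuous.continuousOn
    simp only [ha]
    fun_prop
  have := aux_midconc (fun s => (⟪cfc f (a s) x, x⟫_ℂ).re) ?_ ?_ s hs
  · simpa [ha] using this
  · apply Complex.continuous_re.comp_continuousOn
    apply ContinuousOn.inner _ continuousOn_const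
    exact hcont.clm_apply continuousOn_const
  · intro p hp q hq'
    have h := hconc (a p) (a q) (hsa p) (hsa q) (hnn p hp) (hnn q hq') (hsp p hp) (hsp q hq') x
    have e1 : (1/2 : ℂ) • (a p + a q) = a ((p + q)/2) := by
      rw [show (1/2 : ℂ) = ((1/2 : ℝ) : ℂ) by norm_num, Complex.coe_smul]
      simp only [ha]
      module
    rw [e1, show (1/2 : ℂ) = ((1/2 : ℝ) : ℂ) by norm_num, Complex.coe_smul, aux_re_smul,
      add_apply, inner_add_left, Complex.add_re] at h
    linarith

lemma aux_re_one (r : ℝ) (x : X) :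
    (⟪(algebraMap ℝ (X →L[ℂ] X) r) x, x⟫_ℂ).re = r * ‖x‖^2 := by
  rw [Algebra.algebraMap_eq_smul_one, aux_re_smul]
  simp [inner_self_eq_norm_sq_to_K, ← Complex.ofReal_pow]

lemma aux_scal [Nontrivial X] (f : ℝ → ℝ) (hf : Continuous f) (h0 : f 0 = 0) (c : ℝ)
    (hconc : IsOperatorConcaveOn X f c) (s t : ℝ) (hs : 0 ≤ s) (hst : s ≤ t) (ht : t ≤ c)
    (ht0 : 0 < t) : s * f t ≤ t * f s := by
  obtain ⟨x, hx⟩ := exists_ne (0 : X)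
  have hx' : 0 < ‖x‖^2 := by positivity
  have := aux_conc f hf c hconc (algebraMap ℝ _ t) (algebraMap ℝ _ 0)
    (IsSelfAdjoint.algebraMap _ (IsSelfAdjoint.all _))
    (IsSelfAdjoint.algebraMap _ (IsSelfAdjoint.all _))
    (fun x => by rw [aux_re_one]; positivity) (fun x => by rw [aux_re_one]; simp)
    (fun x => by rw [aux_re_one]; gcongr)
    (fun x => by rw [aux_re_one]; have : 0 ≤ c := by linarith
                 simp; positivity) x (s/t)
    ⟨by positivity, by rw [div_le_one ht0]; exact hst⟩
  have e : (s/t) • (algebraMap ℝ (X →L[ℂ] X) t) + (1 - s/t) • algebraMap ℝ (X →L[ℂ] X) 0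
      = algebraMap ℝ (X →L[ℂ] X) s := by
    simp only [Algebra.algebraMap_eq_smul_one, smul_smul, zero_smul, smul_zero, add_zero]
    congr 1; field_simp
  rw [e, cfc_algebraMap, cfc_algebraMap, cfc_algebraMap, aux_re_one, aux_re_one, aux_re_one, h0]
    at this
  have h2 : (s / t * f t) * ‖x‖^2 ≤ f s * ‖x‖^2 := by linarith
  have h3 := le_of_mul_le_mul_right h2 hx'
  rw [div_mul_eq_mul_div, div_le_iff₀ ht0] at h3
  linarith

/-- Squared norm of `f(A) x` as a quadratic form. -/
lemma aux_normsq (f : ℝ → ℝ) (A : X →L[ℂ] X) (hA : IsSelfAdjoint A)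
    (hf : ContinuousOn f (spectrum ℝ A)) (x : X) :
    ‖cfc f A x‖^2 = (⟪cfc (fun t => (f t)^2) A x, x⟫_ℂ).re := by
  have hsa : IsSelfAdjoint (cfc f A) := cfc_predicate f A
  rw [cfc_pow f 2 A hf hA, pow_two (cfc f A), mul_apply_eq_comp]
  have := (ContinuousLinearMap.isSelfAdjoint_iff_isSymmetric.1 hsa) (cfc f A x) x
  simp only [ContinuousLinearMap.coe_coe] at this
  rw [this, inner_self_eq_norm_sq_to_K]
  simp [← Complex.ofReal_pow]

lemma aux_mono (f g : ℝ → ℝ) (A : X →L[ℂ] X) (hf : ContinuousOn f (spectrum ℝ A))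
    (hg : ContinuousOn g (spectrum ℝ A)) (h : ∀ t ∈ spectrum ℝ A, f t ≤ g t) :
    opLE (cfc f A) (cfc g A) :=
  (aux_le_iff _ _ (cfc_predicate f A) (cfc_predicate g A)).1 (cfc_mono h hf hg)

lemma aux_re_le_norm (A : X →L[ℂ] X) (x : X) : (⟪A x, x⟫_ℂ).re ≤ ‖A‖ * ‖x‖^2 := by
  calc (⟪A x, x⟫_ℂ).re ≤ ‖⟪A x, x⟫_ℂ‖ := Complex.re_le_norm _
    _ ≤ ‖A x‖ * ‖x‖ := norm_inner_le_norm _ _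
    _ ≤ (‖A‖ * ‖x‖) * ‖x‖ := by gcongr; exact A.le_opNorm x
    _ = _ := by ring

lemma aux_sqrt (A : X →L[ℂ] X) (hA : IsSelfAdjoint A) (hn : opNonneg A) (x : X) :
    ‖cfc Real.sqrt A x‖^2 = (⟪A x, x⟫_ℂ).re := by
  rw [aux_normsq _ _ hA (by fun_prop)]
  have : cfc (fun t => (Real.sqrt t)^2) A = A := by
    conv_rhs => rw [← cfc_id ℝ A hA]
    refine cfc_congr fun t ht => ?_
    exact Real.sq_sqrt (spectrum_nonneg_of_nonneg (aux_nonneg_s12 A hA hn) ht)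
  rw [this]

/-- The comparison `C0 ≤ (M²/m²) F(H)`. -/
lemma aux_compare (C0 T H : X →L[ℂ] X) (hT : IsSelfAdjoint T) (hH : IsSelfAdjoint H)
    (hTn : opNonneg T) (hHn : opNonneg H)
    (m M : ℝ) (hm : 0 < m) (hm1 : m ≤ 1) (hM : 1 ≤ M)
    (hl : ∀ u, m^2 * (⟪T u, u⟫_ℂ).re ≤ (⟪H u, u⟫_ℂ).re)
    (hu : ∀ u, (⟪H u, u⟫_ℂ).re ≤ M^2 * (⟪T u, u⟫_ℂ).re)
    (F : ℝ → ℝ) (hF : Continuous F) (hFm : MonotoneOn F (Set.Ici 0))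
    (hF0 : ∀ t, 0 ≤ F t) (hFT : cfc F T = C0)
    (c : ℝ) (hc : ‖H‖ / m^2 ≤ c) (hconc : IsOperatorConcaveOn X F c) (u : X) :
    (⟪C0 u, u⟫_ℂ).re ≤ M^2/m^2 * (⟪cfc F H u, u⟫_ℂ).re := by
  have hm2 : 0 < m^2 := by positivity
  have hM0 : 0 < M := by linarith
  have hM2 : 0 < M^2 := by positivity
  have hm21 : m^2 ≤ 1 := by nlinarith
  have hM21 : 1 ≤ M^2 := by nlinarith
  have hHc : ‖H‖ ≤ m^2 * c := by rwa [div_le_iff₀ hm2, mul_comm] at hc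
  have hc0 : 0 ≤ c := le_trans (by positivity) hc
  have hTb : ∀ x, (⟪T x, x⟫_ℂ).re ≤ c * ‖x‖^2 := by
    intro x
    have h1 := aux_re_le_norm H x
    have h2 := hl x
    have h3 : ‖H‖ * ‖x‖^2 ≤ m^2 * c * ‖x‖^2 := by gcongr
    have : m^2 * (⟪T x, x⟫_ℂ).re ≤ m^2 * (c * ‖x‖^2) := by linarith
    exact le_of_mul_le_mul_left this hm2
  have hHb : ∀ x, (⟪H x, x⟫_ℂ).re ≤ c * ‖x‖^2 := by
    intro x
    have h1 := aux_re_le_norm H x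
    have h3 : ‖H‖ * ‖x‖^2 ≤ m^2 * c * ‖x‖^2 := by gcongr
    have h4 : m^2 * c * ‖x‖^2 ≤ 1 * c * ‖x‖^2 := by gcongr
    linarith
  rcases eq_or_lt_of_le (show m^2 ≤ M^2 by linarith) with heq | hlt
  · have e1 : m^2 = 1 := by linarith
    have e2 : M^2 = 1 := by linarith
    have hle1 : T ≤ H := by
      rw [aux_le_iff _ _ hT hH]; intro x; have := hl x; rw [e1] at this; linarith
    have hle2 : H ≤ T := by
      rw [aux_le_iff _ _ hH hT]; intro x; have := hu x; rw [e2] at this; linarith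
    have e : T = H := le_antisymm hle1 hle2
    rw [← hFT, e, e1, e2]; simp
  set Y : X →L[ℂ] X := (1/(M^2-m^2)) • (H - m^2 • T) with hY
  have hd : 0 < M^2 - m^2 := by linarith
  have hYq : ∀ x, (⟪Y x, x⟫_ℂ).re =
      (1/(M^2-m^2)) * ((⟪H x, x⟫_ℂ).re - m^2 * (⟪T x, x⟫_ℂ).re) := by
    intro x
    rw [hY, aux_re_smul, sub_apply, inner_sub_left, Complex.sub_re, aux_re_smul]
  have hYsa : IsSelfAdjoint Y :=
    (IsSelfAdjoint.all _).smul (hH.sub ((IsSelfAdjoint.all _).smul hT))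
  have hYn : opNonneg Y := by
    intro x; rw [hYq]
    have := hl x
    exact mul_nonneg (by positivity) (by linarith)
  have hYb : ∀ x, (⟪Y x, x⟫_ℂ).re ≤ c * ‖x‖^2 := by
    intro x
    refine le_trans ?_ (hHb x)
    rw [hYq, one_div, inv_mul_le_iff₀ hd]
    have h1 := hu x
    have h2 := hHn x
    have h3 := hTn x
    have h4 : 0 ≤ (M^2-1) * (⟪H x, x⟫_ℂ).re := mul_nonneg (by linarith) h2
    rcases le_total (⟪H x, x⟫_ℂ).re (⟪T x, x⟫_ℂ).re with h5 | h5
    · have := mul_le_mul_of_nonneg_left h5 hm2.le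
      nlinarith
    · have h6 : m^2 * (⟪H x, x⟫_ℂ).re ≤ m^2 * (M^2 * (⟪T x, x⟫_ℂ).re) := by gcongr
      have h7 : (⟪H x, x⟫_ℂ).re * (M^2 - m^2) ≤ M^2 * ((M^2 - m^2) * (⟪H x, x⟫_ℂ).re) := by
        have : 0 ≤ (M^2 - m^2) * (⟪H x, x⟫_ℂ).re := mul_nonneg hd.le h2
        nlinarith
      have h8 : M^2 * ((⟪H x, x⟫_ℂ).re - m^2 * (⟪T x, x⟫_ℂ).re)
          ≤ M^2 * ((M^2 - m^2) * (⟪H x, x⟫_ℂ).re) := by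
        nlinarith [mul_nonneg (mul_nonneg h2 (sub_nonneg.2 hM21)) (sub_nonneg.2 hM21),
          mul_nonneg (mul_nonneg h2 (sub_nonneg.2 hM21)) (sub_nonneg.2 hm21), mul_nonneg h2 (sub_nonneg.2 hM21)]
      exact le_of_mul_le_mul_left h8 hM2
  have key := aux_conc F hF c hconc T Y hT hYsa hTn hYn hTb hYb u (m^2/M^2)
    ⟨by positivity, by rw [div_le_one hM2]; linarith⟩
  have e : (m^2/M^2) • T + (1 - m^2/M^2) • Y = (1/M^2) • H := by
    rw [hY, smul_smul, show (1 - m^2/M^2) * (1/(M^2-m^2)) = 1/M^2 by field_simp, smul_sub,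
      smul_smul, show 1/M^2 * m^2 = m^2/M^2 by ring]
    abel
  have hHspec := aux_spec H hH hHn c hHb
  have e2 : cfc F ((1/M^2) • H) = cfc (fun t => F ((1/M^2) * t)) H := by
    rw [← cfc_const_mul_id (1/M^2) H hH, ← cfc_comp' F (fun t => (1/M^2) * t) H (by fun_prop)
      (by fun_prop)]
  have hmono := aux_mono (fun t => F ((1/M^2) * t)) F H (by fun_prop) (by fun_prop) (by
    intro t ht
    have h0 := (hHspec ht).1
    have h1 : 1/M^2 ≤ 1 := by rw [div_le_one hM2]; exact hM21
    exact hFm (by simp; positivity) h0 (by nlinarith)) u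
  have hYF : 0 ≤ (⟪cfc F Y u, u⟫_ℂ).re := by
    have := aux_mono (fun _ => 0) F Y (by fun_prop) (by fun_prop) (fun t _ => hF0 t) u
    simpa using this
  rw [e, e2, hFT] at key
  have h1 : 0 ≤ (1 - m^2/M^2) * (⟪cfc F Y u, u⟫_ℂ).re :=
    mul_nonneg (by rw [sub_nonneg, div_le_one hM2]; linarith) hYF
  have h2 : m^2/M^2 * (⟪C0 u, u⟫_ℂ).re ≤ (⟪cfc F H u, u⟫_ℂ).re := by linarith
  calc (⟪C0 u, u⟫_ℂ).re = M^2/m^2 * (m^2/M^2 * (⟪C0 u, u⟫_ℂ).re) := by field_simp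
    _ ≤ _ := by gcongr

end aux

section aux2
variable {X : Type*} [NormedAddCommGroup X] [InnerProductSpace ℂ X] [CompleteSpace X]

lemma aux_unit (H : X →L[ℂ] X) (hH : IsSelfAdjoint H) (hHn : opNonneg H) (α : ℝ) (hα : 0 < α) :
    IsUnit ((α : ℂ) • (1 : X →L[ℂ] X) + H) := by
  have h : (-α) ∉ spectrum ℝ H := fun h => by
    have := spectrum_nonneg_of_nonneg (aux_nonneg_s12 H hH hHn) h
    linarith
  rw [spectrum.notMem_iff] at h
  have h2 := h.neg
  convert h2 using 1
  rw [Algebra.algebraMap_eq_smul_one, Complex.coe_smul, neg_smul]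
  abel

/-- Bias estimate. -/
lemma aux_bias (C0 T H G R : X →L[ℂ] X) (hG : IsSelfAdjoint G)
    (m α : ℝ) (hα : 0 < α)
    (hl : ∀ u, m^2 * (⟪T u, u⟫_ℂ).re ≤ (⟪H u, u⟫_ℂ).re)
    (hR : ((α : ℂ) • (1 : X →L[ℂ] X) + H) * R = 1)
    (a b : ℝ) (ha : 0 ≤ a) (hb : 0 ≤ b)
    (hC : ∀ u, (⟪C0 u, u⟫_ℂ).re ≤ a * (‖u‖^2 + m^2/α * (⟪T u, u⟫_ℂ).re))
    (hGG : ∀ u, ‖G u‖^2 ≤ b * (‖u‖^2 + m^2/α * (⟪T u, u⟫_ℂ).re))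
    (v : X) (hv : ‖v‖ ≤ 1) :
    (⟪C0 (((α : ℂ) • R) (G v)), ((α : ℂ) • R) (G v)⟫_ℂ).re ≤ a * b := by
  set w := ((α : ℂ) • R) (G v) with hw
  have hw2 : (α : ℂ) • w + H w = (α : ℂ) • G v := by
    have := congrArg (fun A : X →L[ℂ] X => A ((α : ℂ) • G v)) hR
    simpa [hw] using this
  set p := (⟪G v, w⟫_ℂ).re with hp
  have hp1 : ‖w‖^2 + (1/α) * (⟪H w, w⟫_ℂ).re = p := by
    have h1 := congrArg (fun y => (⟪y, w⟫_ℂ).re) hw2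
    simp only [inner_add_left, inner_smul_left, inner_self_eq_norm_sq_to_K] at h1
    simp [← Complex.ofReal_pow] at h1
    rw [hp]; field_simp; linarith
  have hQ : ‖w‖^2 + m^2/α * (⟪T w, w⟫_ℂ).re ≤ p := by
    rw [← hp1]
    have : (1/α) * (m^2 * (⟪T w, w⟫_ℂ).re) ≤ (1/α) * (⟪H w, w⟫_ℂ).re := by
      gcongr; exact hl w
    have e : m^2/α * (⟪T w, w⟫_ℂ).re = (1/α) * (m^2 * (⟪T w, w⟫_ℂ).re) := by ring
    linarith
  have h1 : (⟪C0 w, w⟫_ℂ).re ≤ a * p := (hC w).trans (by gcongr)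
  have h2 : ‖G w‖^2 ≤ b * p := (hGG w).trans (by gcongr)
  have h3 : p ≤ ‖G w‖ := by
    have := (ContinuousLinearMap.isSelfAdjoint_iff_isSymmetric.1 hG) v w
    simp only [ContinuousLinearMap.coe_coe] at this
    calc p = (⟪v, G w⟫_ℂ).re := by rw [hp, this]
      _ ≤ ‖⟪v, G w⟫_ℂ‖ := Complex.re_le_norm _
      _ ≤ ‖v‖ * ‖G w‖ := norm_inner_le_norm _ _
      _ ≤ 1 * ‖G w‖ := by gcongr
      _ = _ := one_mul _
  have h4 : p ≤ b := by
    by_contra hcon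
    push Not at hcon
    have hp0 : 0 < p := by linarith
    have : p^2 ≤ b * p := (pow_le_pow_left₀ hp0.le h3 2).trans h2
    nlinarith
  exact h1.trans (by gcongr)

end aux2
/-- Theorem: bound for the squared posterior contraction, regular case:
squared bias plus twice the posterior spread is bounded by
`(M²/m²)·[φ(f₀²(α))² + 2δ² tr((αI + H)⁻¹ f₀²(H))]`. -/
theorem statement12
    {X : Type*} [NormedAddCommGroup X] [InnerProductSpace ℂ X] [CompleteSpace X]
    [TopologicalSpace.SeparableSpace X]
    (C0 H : X →L[ℂ] X)
    (hC0sa : IsSelfAdjoint C0) (hC0nn : opNonneg C0)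
    (hC0cpt : IsCompactOperator (⇑C0)) (hC0inj : Function.Injective (⇑C0))
    (hHsa : IsSelfAdjoint H) (hHnn : opNonneg H)
    (Θ : ℝ → ℝ) (hΘ : IsIndexFun Θ)
    (m M : ℝ) (hm : 0 < m) (hm1 : m ≤ 1) (hM : 1 ≤ M)
    (hlink : ∀ u : X, m * ‖cfc Θ C0 u‖ ≤ ‖cfc Real.sqrt H u‖ ∧
      ‖cfc Real.sqrt H u‖ ≤ M * ‖cfc Θ C0 u‖)
    (f0 : ℝ → ℝ) (hf0 : IsIndexFun f0)
    (hf0Θ : ∀ t ∈ Set.Icc (0:ℝ) ‖C0‖, (f0 ((Θ t)^2))^2 = t)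
    (φ : ℝ → ℝ) (hφ : IsIndexFun φ)
    (hreg1 : IsIndexFun (fun t => φ t / Real.sqrt t))
    (hreg2 : IsIndexFun (fun t => Θ t / φ t))
    (g : ℝ → ℝ) (hg : ∀ t : ℝ, g t = φ ((f0 t)^2) / Real.sqrt ((f0 t)^2))
    (c : ℝ) (hc : ‖H‖ / m^2 ≤ c)
    (hconcf0 : IsOperatorConcaveOn X (fun t => (f0 t)^2) c)
    (hconcg : IsOperatorConcaveOn X (fun t => (g t)^2) c)
    (hqual : AntitoneOn (fun t => φ ((f0 t)^2) / t) (Set.Ioi 0))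
    (α δ : ℝ) (hα : 0 < α) (hδ : 0 < δ)
    (v : X) (hv : ‖v‖ ≤ 1)
    {ι : Type*} (e : HilbertBasis ι ℂ X)
    (R Rh : X →L[ℂ] X)
    (hR : R = Ring.inverse ((α : ℂ) • (1 : X →L[ℂ] X) + H))
    (hRh : Rh = cfc Real.sqrt R) :
    ENNReal.ofReal
        (‖cfc Real.sqrt C0 (((α : ℂ) • R) (cfc (fun t => φ t / Real.sqrt t) C0 v))‖^2)
      + 2 * ENNReal.ofReal (δ^2) *
          ∑' i : ι, ENNReal.ofReal ((⟪C0 (Rh (e i)), Rh (e i)⟫_ℂ).re)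
    ≤ ENNReal.ofReal (M^2/m^2) *
        (ENNReal.ofReal ((φ ((f0 α)^2))^2)
          + 2 * ENNReal.ofReal (δ^2) *
              ∑' i : ι, ENNReal.ofReal
                ((⟪cfc (fun t => (f0 t)^2) H (Rh (e i)), Rh (e i)⟫_ℂ).re)) := by
  classical
  rcases subsingleton_or_nontrivial X with hsub | hnt
  · have h0 : ∀ y : X, y = 0 := fun y => Subsingleton.elim _ _
    have e1 : ∀ x y : X, ⟪x, y⟫_ℂ = 0 := fun x y => by rw [h0 x, inner_zero_left]
    have e2 : ∀ x : X, ‖x‖ = 0 := fun x => by rw [h0 x, norm_zero]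
    simp only [e1, e2]
    simp
  have hm2 : 0 < m^2 := by positivity
  have hm21 : m^2 ≤ 1 := by nlinarith
  have hM21 : 1 ≤ M^2 := by nlinarith
  set F : ℝ → ℝ := fun t => (f0 t)^2 with hFdef
  have hFc : Continuous F := hf0.continuous.pow 2
  have hFm : MonotoneOn F (Set.Ici 0) := fun a ha b hb hab =>
    pow_le_pow_left₀ (hf0.nonneg a ha) (hf0.monotoneOn ha hb hab) 2
  have hF0 : ∀ t, 0 ≤ F t := fun t => sq_nonneg _
  have hFz : F 0 = 0 := by simp [hFdef, hf0.map_zero]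
  have hΘc := hΘ.continuous
  set T : X →L[ℂ] X := cfc (fun t => (Θ t)^2) C0 with hTdef
  have hTsa : IsSelfAdjoint T := cfc_predicate _ _
  have hTq : ∀ u, (⟪T u, u⟫_ℂ).re = ‖cfc Θ C0 u‖^2 := fun u =>
    (aux_normsq Θ C0 hC0sa hΘc.continuousOn u).symm
  have hTn : opNonneg T := fun u => by rw [hTq]; positivity
  have hl : ∀ u, m^2 * (⟪T u, u⟫_ℂ).re ≤ (⟪H u, u⟫_ℂ).re := by
    intro u
    rw [hTq, ← aux_sqrt H hHsa hHnn, ← mul_pow]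
    exact pow_le_pow_left₀ (by positivity) (hlink u).1 2
  have hu : ∀ u, (⟪H u, u⟫_ℂ).re ≤ M^2 * (⟪T u, u⟫_ℂ).re := by
    intro u
    rw [hTq, ← aux_sqrt H hHsa hHnn, ← mul_pow]
    exact pow_le_pow_left₀ (by positivity) (hlink u).2 2
  have hCspec : spectrum ℝ C0 ⊆ Set.Icc 0 ‖C0‖ := aux_spec C0 hC0sa hC0nn _ (aux_re_le_norm C0)
  have hFT : cfc F T = C0 := by
    rw [hTdef, ← cfc_comp' F (fun t => (Θ t)^2) C0 (by fun_prop) (by fun_prop)]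
    conv_rhs => rw [← cfc_id ℝ C0 hC0sa]
    exact cfc_congr fun t ht => hf0Θ t (hCspec ht)
  have hcmp := aux_compare C0 T H hTsa hHsa hTn hHnn m M hm hm1 hM hl hu F hFc hFm hF0 hFT c hc
    hconcf0
  -- bound on the spectrum of `T`
  have hHc : ‖H‖ ≤ m^2 * c := by rwa [div_le_iff₀ hm2, mul_comm] at hc
  have hTb : ∀ x, (⟪T x, x⟫_ℂ).re ≤ c * ‖x‖^2 := by
    intro x
    have h1 := aux_re_le_norm H x
    have h2 := hl x
    have h3 : ‖H‖ * ‖x‖^2 ≤ m^2 * c * ‖x‖^2 := by gcongr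
    have : m^2 * (⟪T x, x⟫_ℂ).re ≤ m^2 * (c * ‖x‖^2) := by linarith
    exact le_of_mul_le_mul_left this hm2
  have hTspec := aux_spec T hTsa hTn c hTb
  have hΘle : ∀ t ∈ spectrum ℝ C0, (Θ t)^2 ≤ c := by
    intro t ht
    have : (Θ t)^2 ∈ spectrum ℝ T := by
      rw [hTdef, cfc_map_spectrum (fun t => (Θ t)^2) C0 hC0sa (by fun_prop)]
      exact ⟨t, ht, rfl⟩
    exact (hTspec this).2
  -- the function `g`
  have hg2 : ∀ t, g t = (fun t => φ t / Real.sqrt t) (F t) := fun t => hg t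
  have hgc : Continuous g := by
    have : g = (fun t => φ t / Real.sqrt t) ∘ F := funext hg2
    rw [this]; exact hreg1.continuous.comp hFc
  have hgn : ∀ t, 0 ≤ g t := fun t => by rw [hg2]; exact hreg1.nonneg _ (hF0 t)
  have hgm : MonotoneOn g (Set.Ici 0) := fun a ha b hb hab => by
    rw [hg2, hg2]; exact hreg1.monotoneOn (hF0 a) (hF0 b) (hFm ha hb hab)
  have hgz : g 0 = 0 := by rw [hg2, hFz]; exact hreg1.map_zero
  have hg2m : MonotoneOn (fun t => (g t)^2) (Set.Ici 0) := fun a ha b hb hab =>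
    pow_le_pow_left₀ (hgn a) (hgm ha hb hab) 2
  set τ := (Θ ‖C0‖)^2 with hτ
  set β := min (α/m^2) (max τ α) with hβ
  have hαm : α ≤ α/m^2 := by rw [le_div_iff₀ hm2]; nlinarith
  have hαβ : α ≤ β := le_min hαm (le_max_right _ _)
  have hβ0 : 0 < β := lt_of_lt_of_le hα hαβ
  have hscal : ∀ k : ℝ → ℝ, Continuous k → MonotoneOn k (Set.Ici 0) → k 0 = 0 → (∀ t, 0 ≤ k t) →
      IsOperatorConcaveOn X k c → ∀ t ∈ spectrum ℝ C0,
      k ((Θ t)^2) ≤ k β * (1 + m^2/α * (Θ t)^2) := by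
    intro k hk hkm hkz hkn hkc t ht
    have hs0 : 0 ≤ (Θ t)^2 := sq_nonneg _
    have hpos : 0 ≤ m^2/α * (Θ t)^2 := by positivity
    rcases le_or_gt ((Θ t)^2) β with hle | hgt
    · have h1 := hkm hs0 hβ0.le hle
      have h2 : 0 ≤ k β * (m^2/α * (Θ t)^2) := mul_nonneg (hkn _) hpos
      linarith
    · have hsτ : (Θ t)^2 ≤ τ := by
        have hc' := hCspec ht
        exact pow_le_pow_left₀ (hΘ.nonneg t hc'.1)
          (hΘ.monotoneOn hc'.1 (norm_nonneg C0) hc'.2) 2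
      have hβe : β = α/m^2 := by
        rcases min_choice (α/m^2) (max τ α) with h | h
        · rw [hβ, h]
        · exfalso
          have := le_max_left τ α
          rw [hβ, h] at hgt
          linarith
      have h1 := aux_scal k hk hkz c hkc β ((Θ t)^2) hβ0.le hgt.le (hΘle t ht) (by linarith)
      have h2 : k ((Θ t)^2) ≤ (Θ t)^2 * k β / β := by
        rw [le_div_iff₀ hβ0]; linarith
      have h3 : (Θ t)^2 * k β / β = k β * (m^2/α * (Θ t)^2) := by
        rw [hβe]; field_simp
      have := hkn β
      linarith
  have hquad : ∀ (a : ℝ) (u : X), (⟪cfc (fun t => a * (1 + m^2/α * (Θ t)^2)) C0 u, u⟫_ℂ).re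
      = a * (‖u‖^2 + m^2/α * (⟪T u, u⟫_ℂ).re) := by
    intro a u
    have : cfc (fun t => a * (1 + m^2/α * (Θ t)^2)) C0
        = a • (algebraMap ℝ (X →L[ℂ] X) 1 + (m^2/α) • T) := by
      rw [cfc_const_mul a _ C0 (by fun_prop),
        cfc_const_add 1 _ C0 (by fun_prop) hC0sa, cfc_const_mul _ _ C0 (by fun_prop)]
    rw [this, aux_re_smul, add_apply, inner_add_left, Complex.add_re, aux_re_smul, aux_re_one,
      one_mul]
  have hC : ∀ u, (⟪C0 u, u⟫_ℂ).re ≤ F β * (‖u‖^2 + m^2/α * (⟪T u, u⟫_ℂ).re) := by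
    intro u
    rw [← hquad]
    have h := aux_mono id (fun t => F β * (1 + m^2/α * (Θ t)^2)) C0 (by fun_prop) (by fun_prop)
      (fun t ht => by
        have := hscal F hFc hFm hFz hF0 hconcf0 t ht
        rw [show F ((Θ t)^2) = t from hf0Θ t (hCspec ht)] at this
        exact this) u
    rwa [cfc_id ℝ C0 hC0sa] at h
  have hreg1c := hreg1.continuous
  set G : X →L[ℂ] X := cfc (fun t => φ t / Real.sqrt t) C0 with hGdef
  have hGG : ∀ u, ‖G u‖^2 ≤ (g β)^2 * (‖u‖^2 + m^2/α * (⟪T u, u⟫_ℂ).re) := by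
    intro u
    rw [← hquad, hGdef, aux_normsq _ _ hC0sa hreg1c.continuousOn]
    refine aux_mono _ _ C0 (hreg1c.pow 2).continuousOn (by fun_prop) (fun t ht => ?_) u
    have := hscal (fun t => (g t)^2) (hgc.pow 2) hg2m (by simp [hgz]) (fun t => sq_nonneg _)
      hconcg t ht
    simp only [hg2 ((Θ t)^2), show F ((Θ t)^2) = t from hf0Θ t (hCspec ht)] at this
    exact this
  have hRinv : ((α : ℂ) • (1 : X →L[ℂ] X) + H) * R = 1 := by
    rw [hR]; exact Ring.mul_inverse_cancel _ (aux_unit H hHsa hHnn α hα)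
  have hbias := aux_bias C0 T H G R (cfc_predicate _ _) m α hα hl hRinv (F β) ((g β)^2)
    (hF0 β) (sq_nonneg _) hC hGG v hv
  have hψ : F β * (g β)^2 = (φ (F β))^2 := by
    rw [hg2]
    rcases eq_or_lt_of_le (hF0 β) with h | h
    · simp [← h, hφ.map_zero]
    · simp only [div_pow, Real.sq_sqrt (hF0 β)]
      field_simp
  have hψβ : (φ (F β))^2 ≤ M^2/m^2 * (φ (F α))^2 := by
    have hK : 1/m^2 ≤ M^2/m^2 := by gcongr
    suffices h : (φ (F β))^2 ≤ 1/m^2 * (φ (F α))^2 from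
      h.trans (by gcongr)
    rcases eq_or_lt_of_le hαβ with h | h
    · rw [← h]
      have : 1 ≤ 1/m^2 := by rw [le_div_iff₀ hm2]; linarith
      nlinarith [sq_nonneg (φ (F α))]
    have hβτ : β ≤ τ := by
      rcases le_total τ α with h' | h'
      · have : β ≤ max τ α := min_le_right _ _
        rw [max_eq_right h'] at this
        exact absurd (lt_of_lt_of_le h this) (lt_irrefl _)
      · have : β ≤ max τ α := min_le_right _ _
        rwa [max_eq_left h'] at this
    have hivt := intermediate_value_Icc (norm_nonneg C0)
      (f := fun t => (Θ t)^2) (by fun_prop)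
    simp only [hΘ.map_zero] at hivt
    obtain ⟨t1, ht1, e1⟩ := hivt (show α ∈ _ from ⟨by simpa using hα.le, by linarith⟩)
    obtain ⟨t2, ht2, e2⟩ := hivt (show β ∈ _ from ⟨by simpa using hβ0.le, hβτ⟩)
    simp only at e1 e2
    have hF1 : F α = t1 := by rw [← e1]; exact hf0Θ t1 ht1
    have hF2 : F β = t2 := by rw [← e2]; exact hf0Θ t2 ht2
    have ht12 : t1 ≤ t2 := by rw [← hF1, ← hF2]; exact hFm hα.le hβ0.le hαβ
    have hq := hqual (show α ∈ Set.Ioi 0 from hα) (show β ∈ Set.Ioi 0 from hβ0) hαβ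
    simp only at hq
    change φ (F β) / β ≤ φ (F α) / α at hq
    rw [hF1, hF2] at hq ⊢
    have hp1 := hφ.nonneg t1 ht1.1
    have hp2 := hφ.nonneg t2 ht2.1
    rcases eq_or_lt_of_le hp1 with hz | hpos
    · rw [← hz, zero_div, div_le_iff₀ hβ0, zero_mul] at hq
      have : φ t2 = 0 := le_antisymm hq hp2
      rw [this, ← hz]; simp
    · have hpos2 : 0 < φ t2 := lt_of_lt_of_le hpos (hφ.monotoneOn ht1.1 ht2.1 ht12)
      have hr := hreg2.monotoneOn ht1.1 ht2.1 ht12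
      change Θ t1 / φ t1 ≤ Θ t2 / φ t2 at hr
      rw [div_le_div_iff₀ hpos hpos2] at hr
      have hr2 := pow_le_pow_left₀ (mul_nonneg (hΘ.nonneg t1 ht1.1) hp2) hr 2
      rw [mul_pow, mul_pow, e1, e2] at hr2
      have hβm : β ≤ α/m^2 := min_le_left _ _
      have h5 : β * (φ t1)^2 ≤ α/m^2 * (φ t1)^2 := by gcongr
      have h6 : α * (φ t2)^2 ≤ α * (1/m^2 * (φ t1)^2) := by
        calc _ ≤ α/m^2 * (φ t1)^2 := hr2.trans h5
          _ = _ := by ring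
      exact le_of_mul_le_mul_left h6 hα
  rw [mul_add]
  refine add_le_add ?_ ?_
  · rw [← ENNReal.ofReal_mul (by positivity)]
    apply ENNReal.ofReal_le_ofReal
    rw [aux_sqrt C0 hC0sa hC0nn]
    rw [hψ] at hbias
    exact hbias.trans hψβ
  · rw [mul_left_comm]
    gcongr
    rw [← ENNReal.tsum_mul_left]
    refine ENNReal.tsum_le_tsum fun i => ?_
    rw [← ENNReal.ofReal_mul (by positivity)]
    exact ENNReal.ofReal_le_ofReal (hcmp _)
end
end
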